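/- arXiv:math/0010259 — 2 statements merged into one kernel-verified Lean document; each statement's English description precedes it below -/
import Mathlib

section
/- For every λ ∈ ℂ and all φ, ψ ∈ A, one has C^λ_0(φ,ψ) = φψ and C^λ_1(φ,ψ) − C^λ_1(ψ,φ) = {φ,ψ}. -/
open MvPolynomial

/-- The polynomial symbol algebra `A = ℂ[u₁,…,uₙ,ξ₁,…,ξₙ]`: variables `Sum.inl i` are the
`uᵢ` and variables `Sum.inr i` are the `ξᵢ`. -/
abbrev PolA (n : ℕ) := MvPolynomial (Fin n ⊕ Fin n) ℂ

namespace LO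

/-- ξ-degree of a monomial exponent. -/
def xiDeg {n : ℕ} (d : (Fin n ⊕ Fin n) →₀ ℕ) : ℕ :=
  ∑ i : Fin n, d (Sum.inr i)

/-- `c(E)`: the operator multiplying the ξ-degree-`m` component by `c m`. -/
noncomputable def cE {n : ℕ} (c : ℕ → ℂ) (φ : PolA n) : PolA n :=
  ∑ d ∈ φ.support, monomial d (c (xiDeg d) * coeff d φ)

/-- `D = Σᵢ ∂²/∂uᵢ∂ξᵢ`. -/
noncomputable def Dop {n : ℕ} (φ : PolA n) : PolA n :=
  ∑ i : Fin n, pderiv (Sum.inl i) (pderiv (Sum.inr i) φ)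

/-- The scalar `h^λ_d(m)`. -/
noncomputable def hScal (n : ℕ) (lam : ℂ) (d m : ℕ) : ℂ :=
  (d.factorial : ℂ)⁻¹ *
    ∏ j ∈ Finset.range d,
      ((m : ℂ) + (j : ℂ) + lam * ((n : ℂ) + 1)) /
        (2 * (m : ℂ) + (j : ℂ) + (n : ℂ) + (d : ℂ))

/-- The scalar `g^λ_d(m)`. -/
noncomputable def gScal (n : ℕ) (lam : ℂ) (d m : ℕ) : ℂ :=
  (d.factorial : ℂ)⁻¹ *
    ∏ j ∈ Finset.range d,
      (-(m : ℂ) - (j : ℂ) - lam * ((n : ℂ) + 1)) /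
        (2 * (m : ℂ) + (j : ℂ) + (n : ℂ) + 1)

/-- `bh^λ_d = h^λ_d(E) ∘ D^d` (equal to the identity for `d = 0`). -/
noncomputable def bh {n : ℕ} (lam : ℂ) (d : ℕ) (φ : PolA n) : PolA n :=
  cE (hScal n lam d) (Dop^[d] φ)

/-- `bg^λ_d = g^λ_d(E) ∘ D^d` (equal to the identity for `d = 0`). -/
noncomputable def bg {n : ℕ} (lam : ℂ) (d : ℕ) (φ : PolA n) : PolA n :=
  cE (gScal n lam d) (Dop^[d] φ)

/-- `N_k(φ,ψ) = (1/k!) Σ_{α ∈ {1,…,n}^k} ∂^kφ/∂ξ_α · ∂^kψ/∂u_α`. -/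
noncomputable def Nop {n : ℕ} (k : ℕ) (φ ψ : PolA n) : PolA n :=
  (k.factorial : ℂ)⁻¹ •
    ∑ α : Fin k → Fin n,
      ((List.ofFn α).foldr (fun i acc => pderiv (Sum.inr i) acc) φ) *
      ((List.ofFn α).foldr (fun i acc => pderiv (Sum.inl i) acc) ψ)

/-- The coefficient `C^λ_p` of the Lecomte–Ovsienko star product. -/
noncomputable def C (n : ℕ) (lam : ℂ) (p : ℕ) (φ ψ : PolA n) : PolA n :=
  ∑ i ∈ Finset.range (p + 1), ∑ j ∈ Finset.range (p + 1),
    ∑ k ∈ Finset.range (p + 1), ∑ m ∈ Finset.range (p + 1),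
      if i + j + k + m = p then bg lam m (Nop k (bh lam i φ) (bh lam j ψ)) else 0

/-- The Poisson bracket `{φ,ψ}`. -/
noncomputable def pb {n : ℕ} (φ ψ : PolA n) : PolA n :=
  ∑ i : Fin n,
    (pderiv (Sum.inr i) φ * pderiv (Sum.inl i) ψ
      - pderiv (Sum.inl i) φ * pderiv (Sum.inr i) ψ)

/-- `φ ∈ A^m` (ξ-homogeneous of degree `m`; for `m < 0` this forces `φ = 0`). -/
def IsXiHomog {n : ℕ} (m : ℤ) (φ : PolA n) : Prop :=
  ∀ d ∈ φ.support, (xiDeg d : ℤ) = m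

/-- The set of spanning momentum functions of the projective `sl_{n+1}(ℝ)`-action. -/
noncomputable def momSet (n : ℕ) : Set (PolA n) :=
  (Set.range fun i : Fin n => (X (Sum.inr i) : PolA n)) ∪
  (Set.range fun ij : Fin n × Fin n =>
    (X (Sum.inl ij.1) * X (Sum.inr ij.2) : PolA n)) ∪
  (Set.range fun i : Fin n =>
    (X (Sum.inl i) * ∑ k : Fin n, X (Sum.inl k) * X (Sum.inr k) : PolA n))

/-- The span `M` of the momentum functions. -/
noncomputable def momSpan (n : ℕ) : Submodule ℂ (PolA n) := Submodule.span ℂ (momSet n)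

/-- The Weyl algebra `W` of differential operators with polynomial coefficients,
as a subalgebra of `End_ℂ(A)`. -/
noncomputable def Weyl (n : ℕ) : Subalgebra ℂ (Module.End ℂ (PolA n)) :=
  Algebra.adjoin ℂ
    ((Set.range fun i : Fin n =>
        (LinearMap.mulLeft ℂ (X (Sum.inl i)) : Module.End ℂ (PolA n))) ∪
     (Set.range fun i : Fin n =>
        (LinearMap.mulLeft ℂ (X (Sum.inr i)) : Module.End ℂ (PolA n))) ∪
     (Set.range fun v : Fin n ⊕ Fin n =>
        ((pderiv v).toLinearMap : Module.End ℂ (PolA n))))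

/-- A bilinear map `B : A × A → A` is bidifferential if it is a finite sum
`B(φ,ψ) = Σ_α A_α(φ)·B_α(ψ)` with `A_α, B_α` in the Weyl algebra. -/
def Bidiff (n : ℕ) (B : PolA n → PolA n → PolA n) : Prop :=
  ∃ (N : ℕ) (Aop Bop : Fin N → Weyl n),
    ∀ φ ψ : PolA n,
      B φ ψ = ∑ α : Fin N,
        (Aop α : Module.End ℂ (PolA n)) φ * (Bop α : Module.End ℂ (PolA n)) ψ

/-- The scalar by which `T_p = ∏_{i=1}^{⌊p/2⌋}(E'+i)` acts on `A^m`. -/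
noncomputable def TScal (n p m : ℕ) : ℂ :=
  ∏ i ∈ Finset.Icc 1 (p / 2), ((m : ℂ) + (n : ℂ) / 2 + (i : ℂ))

/-- The scalar by which `S_p = ∏_{i=1}^{⌊p/2⌋}(E'−i)` acts on `A^m`. -/
noncomputable def SScal (n p m : ℕ) : ℂ :=
  ∏ i ∈ Finset.Icc 1 (p / 2), ((m : ℂ) + (n : ℂ) / 2 - (i : ℂ))

/-- The operator `T_p`. -/
noncomputable def Tp (n p : ℕ) : PolA n → PolA n := cE (TScal n p)

/-- The operator `S_p`. -/
noncomputable def Sp (n p : ℕ) : PolA n → PolA n := cE (SScal n p)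

/-- The fiberwise Euler operator `E = Σ ξᵢ ∂/∂ξᵢ` as an endomorphism. -/
noncomputable def Elin (n : ℕ) : Module.End ℂ (PolA n) :=
  ∑ i : Fin n,
    (LinearMap.mulLeft ℂ (X (Sum.inr i)) : Module.End ℂ (PolA n)) ∘ₗ
      (pderiv (Sum.inr i)).toLinearMap

/-- `E' = E + n/2` as an endomorphism. -/
noncomputable def E'lin (n : ℕ) : Module.End ℂ (PolA n) :=
  Elin n + ((n : ℂ) / 2) • 1

/-- `D` as an endomorphism. -/
noncomputable def Dlin (n : ℕ) : Module.End ℂ (PolA n) :=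
  ∑ i : Fin n,
    ((pderiv (Sum.inl i)).toLinearMap : Module.End ℂ (PolA n)) ∘ₗ
      (pderiv (Sum.inr i)).toLinearMap

/-- `L^{(m)} = −(1/16)(ξ_m∘D − 2E'∘∂/∂u_m)∘D`. -/
noncomputable def Lop (n : ℕ) (m : Fin n) : Module.End ℂ (PolA n) :=
  (-(1 / 16 : ℂ)) •
    (((LinearMap.mulLeft ℂ (X (Sum.inr m)) : Module.End ℂ (PolA n)) ∘ₗ Dlin n
        - (2 : ℂ) • (E'lin n ∘ₗ (pderiv (Sum.inl m)).toLinearMap)) ∘ₗ Dlin n)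

end LO

/-! In `C^λ_1` the terms containing `bh_1` or `bg_1` involve only the commutative
product `N₀`, so their sum is symmetric in `φ` and `ψ`; hence the antisymmetric part comes from
`N₁` alone, whatever the scalars `h^λ_1` and `g^λ_1` are. -/

namespace LO

variable {n : ℕ} (lam : ℂ) (φ ψ : PolA n)

theorem cE_const (a : ℂ) : cE (fun _ ↦ a) φ = a • φ := by
  conv_rhs => rw [← φ.support_sum_monomial_coeff, Finset.smul_sum]
  simp only [cE, smul_monomial, smul_eq_mul]

theorem hScal_zero (n : ℕ) : hScal n lam 0 = fun _ ↦ 1 := by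
  funext m
  simp [hScal]

theorem gScal_zero (n : ℕ) : gScal n lam 0 = fun _ ↦ 1 := by
  funext m
  simp [gScal]

theorem bh_zero : bh lam 0 φ = φ := by
  rw [bh, hScal_zero, cE_const, one_smul, Function.iterate_zero_apply]

theorem bg_zero : bg lam 0 φ = φ := by
  rw [bg, gScal_zero, cE_const, one_smul, Function.iterate_zero_apply]

theorem Nop_zero : Nop 0 φ ψ = φ * ψ := by
  simp [Nop]

theorem Nop_one :
    Nop 1 φ ψ = ∑ i : Fin n, pderiv (Sum.inr i) φ * pderiv (Sum.inl i) ψ := by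
  rw [Nop, ← (Equiv.funUnique (Fin 1) (Fin n)).symm.sum_comp]
  simp

theorem Nop_one_sub_swap : Nop 1 φ ψ - Nop 1 ψ φ = pb φ ψ := by
  simp only [pb, Nop_one, Finset.sum_sub_distrib, mul_comm (pderiv (Sum.inl _) φ)]

theorem C_zero : C n lam 0 φ ψ = φ * ψ := by
  simp [C, bh_zero, bg_zero, Nop_zero]

theorem C_one :
    C n lam 1 φ ψ = Nop 1 φ ψ + (bh lam 1 φ * ψ + φ * bh lam 1 ψ + bg lam 1 (φ * ψ)) := by
  simp only [C, Nat.reduceAdd, Finset.sum_range_succ, Finset.range_one, Finset.sum_singleton,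
    add_zero, zero_add, Nat.add_eq_right, Nat.add_eq_zero_iff, one_ne_zero, zero_ne_one, and_true,
    and_false, ↓reduceIte, bh_zero, bg_zero, Nop_zero]
  ring

theorem C_one_sub_swap : C n lam 1 φ ψ - C n lam 1 ψ φ = Nop 1 φ ψ - Nop 1 ψ φ := by
  rw [C_one, C_one, mul_comm ψ φ]
  ring

end LO

/-- `C^λ_0(φ,ψ) = φψ` and `C^λ_1(φ,ψ) − C^λ_1(ψ,φ) = {φ,ψ}`. -/
theorem stmt_3 (n : ℕ) (hn : 1 ≤ n) (lam : ℂ) (φ ψ : PolA n) :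
    LO.C n lam 0 φ ψ = φ * ψ ∧
    LO.C n lam 1 φ ψ - LO.C n lam 1 ψ φ = LO.pb φ ψ := by
  constructor
  · exact LO.C_zero lam φ ψ
  · rw [LO.C_one_sub_swap, LO.Nop_one_sub_swap]
end

section
/- For every λ ∈ ℂ, every p ≥ 0, and all φ, ψ ∈ A, one has C^λ_p(φ,ψ) = (−1)^p · C^{1−λ}_p(ψ,φ). -/
open MvPolynomial

/-!
Write `H^λ = ∑ bh^λ_d ħ^d` and `G^λ = ∑ bg^λ_d ħ^d` as formal series of operators, let
`P = ∑ ∂/∂ξᵢ ⊗ ∂/∂uᵢ` on `A ⊗ A`, let `Q = ∑ ∂/∂uᵢ ⊗ ∂/∂ξᵢ` be its flip, and let `μ` be the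
multiplication of `A`. Then `C^λ_p` is the coefficient of `ħ^p` in `G^λ μ e^{ħP} (H^λ ⊗ H^λ)`.

Since `D` lowers the `ξ`-degree by one, `D c(E) = c(E + 1) D`, and two instances of the
Chu–Vandermonde identity give `G^λ(ħ) = G^{1-λ}(-ħ) e^{-ħD}` and
`e^{-ħD} H^λ(ħ) = H^{1-λ}(-ħ)`. By the Leibniz rule `D μ = μ (P + Q + D ⊗ 1 + 1 ⊗ D)`, a sum of
commuting operators, so `e^{-ħD} μ e^{ħP} = μ e^{-ħQ} (e^{-ħD} ⊗ e^{-ħD})`. Hence the series of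
`C^λ` equals `G^{1-λ}(-ħ) μ e^{-ħQ} (H^{1-λ}(-ħ) ⊗ H^{1-λ}(-ħ))`, which is that of `C^{1-λ}` at `-ħ`
with its arguments exchanged, because `μ` is symmetric.
-/

namespace LO

open Finset TensorProduct
open scoped PowerSeries

section BinomialIdentities

theorem choose_neg_eq_pow_mul_multichoose {R : Type*} [CommRing R] [BinomialRing R] (x : R)
    (d : ℕ) : Ring.choose (-x) d = (-1) ^ d * Ring.multichoose x d := by
  rw [Ring.choose_neg, ← Ring.multichoose_eq, Units.smul_def, zsmul_eq_mul]
  simp [Int.negOnePow_def]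

theorem sum_choose_mul_multichoose_add {R : Type*} [CommRing R] [BinomialRing R] (a x : R)
    (d : ℕ) :
    ∑ ij ∈ antidiagonal d, Ring.choose a ij.1 * Ring.multichoose (x + ij.1) ij.2 =
      Ring.multichoose (x + a) d := by
  rw [Ring.multichoose_eq, show x + a + d - 1 = a + (x + d - 1) by ring,
    Ring.add_choose_eq d (Commute.all _ _)]
  refine sum_congr rfl fun ij hij => ?_
  rw [Ring.multichoose_eq, ← mem_antidiagonal.mp hij, Nat.cast_add, add_assoc x]

variable {K : Type*} [Field K] [CharZero K]

theorem sum_choose_mul_multichoose_div_ascFactorial (a x : K) (N d : ℕ) :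
    ∑ ij ∈ antidiagonal d, Ring.choose a ij.1 / N.ascFactorial ij.1 *
        (Ring.multichoose (x + ij.1) ij.2 / (N + ij.1).ascFactorial ij.2) =
      Ring.multichoose (x + a) d / N.ascFactorial d := by
  rw [← sum_choose_mul_multichoose_add, sum_div]
  refine sum_congr rfl fun ij hij => ?_
  rw [div_mul_div_comm, ← Nat.cast_mul, Nat.ascFactorial_mul_ascFactorial,
    mem_antidiagonal.mp hij]

theorem multichoose_eq_inv_factorial_mul_prod (x : K) (d : ℕ) :
    Ring.multichoose x d = (d.factorial : K)⁻¹ * ∏ j ∈ range d, (x + j) := by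
  rw [eq_inv_mul_iff_mul_eq₀ (Nat.cast_ne_zero.mpr d.factorial_ne_zero), ← nsmul_eq_mul,
    Ring.factorial_nsmul_multichoose_eq_ascPochhammer,
    Polynomial.ascPochhammer_smeval_eq_eval]
  induction d with
  | zero => simp
  | succ d ih => rw [ascPochhammer_succ_eval, prod_range_succ, ih]

theorem choose_neg_eq_inv_factorial_mul_prod (x : K) (d : ℕ) :
    Ring.choose (-x) d = (d.factorial : K)⁻¹ * ∏ j ∈ range d, (-x - j) := by
  have hprod : ∏ j ∈ range d, (-x - j) = (-1) ^ d * ∏ j ∈ range d, (x + j) := by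
    simp_rw [← neg_add', prod_neg, card_range]
  rw [choose_neg_eq_pow_mul_multichoose, multichoose_eq_inv_factorial_mul_prod, hprod,
    mul_left_comm]

theorem multichoose_natCast_div_ascFactorial {N d : ℕ} (h : N = 0 → d = 0) :
    Ring.multichoose (N : K) d / N.ascFactorial d = (d.factorial : K)⁻¹ := by
  have hne : N.ascFactorial d ≠ 0 := by
    rw [Nat.ascFactorial_eq_prod_range, prod_ne_zero_iff]
    intro j hj
    have := mem_range.mp hj
    lia
  have hprod : ∏ j ∈ range d, ((N : K) + j) = N.ascFactorial d := by
    rw [Nat.ascFactorial_eq_prod_range]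
    push_cast
    rfl
  rw [multichoose_eq_inv_factorial_mul_prod, hprod,
    mul_div_cancel_right₀ _ (Nat.cast_ne_zero.mpr hne)]

end BinomialIdentities

section Scalars

variable (n : ℕ) (lam : ℂ) (d m : ℕ)

theorem hScal_eq_multichoose_div :
    hScal n lam d m =
      Ring.multichoose (m + lam * (n + 1)) d / ((2 * m + n + d).ascFactorial d : ℂ) := by
  rw [hScal, multichoose_eq_inv_factorial_mul_prod, Nat.ascFactorial_eq_prod_range, mul_div_assoc,
    Nat.cast_prod, ← prod_div_distrib]
  congr 1
  refine prod_congr rfl fun j _ => ?_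
  push_cast
  ring

theorem gScal_eq_choose_div :
    gScal n lam d m =
      Ring.choose (-(m + lam * (n + 1))) d / ((2 * m + n + 1).ascFactorial d : ℂ) := by
  rw [gScal, choose_neg_eq_inv_factorial_mul_prod, Nat.ascFactorial_eq_prod_range, mul_div_assoc,
    Nat.cast_prod, ← prod_div_distrib]
  congr 1
  refine prod_congr rfl fun j _ => ?_
  push_cast
  ring

theorem sum_neg_one_pow_div_factorial_mul_hScal :
    ∑ ij ∈ antidiagonal d, (-1) ^ ij.1 * (ij.1.factorial : ℂ)⁻¹ * hScal n lam ij.2 (m + ij.1) =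
      (-1) ^ d * hScal n (1 - lam) d m := by
  set N := 2 * m + n + d with hN
  have hneg : -(m + (1 - lam) * (n + 1) : ℂ) = m + lam * (n + 1) + -(N : ℂ) + d - 1 := by
    rw [hN]
    push_cast
    ring
  rw [hScal_eq_multichoose_div, ← mul_div_assoc, ← choose_neg_eq_pow_mul_multichoose, hneg,
    ← Ring.multichoose_eq, ← sum_choose_mul_multichoose_div_ascFactorial]
  refine sum_congr rfl fun ij hij => ?_
  have hd := mem_antidiagonal.mp hij
  rw [hScal_eq_multichoose_div, choose_neg_eq_pow_mul_multichoose, mul_div_assoc ((-1) ^ ij.1),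
    multichoose_natCast_div_ascFactorial (by lia), Nat.cast_add, add_right_comm (m : ℂ),
    show 2 * (m + ij.1) + n + ij.2 = N + ij.1 by lia]

theorem sum_gScal_mul_neg_one_pow_div_factorial :
    ∑ ij ∈ antidiagonal d,
        (-1) ^ ij.1 * gScal n (1 - lam) ij.1 m * ((-1) ^ ij.2 * (ij.2.factorial : ℂ)⁻¹) =
      gScal n lam d m := by
  set N := 2 * m + n + 1 with hN
  have hadd : (m + lam * (n + 1) : ℂ) = N + -(m + (1 - lam) * (n + 1)) := by
    rw [hN]
    push_cast
    ring
  rw [gScal_eq_choose_div, choose_neg_eq_pow_mul_multichoose, mul_div_assoc, hadd,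
    ← sum_choose_mul_multichoose_div_ascFactorial, mul_sum]
  refine sum_congr rfl fun ij hij => ?_
  rw [gScal_eq_choose_div, ← Nat.cast_add, multichoose_natCast_div_ascFactorial (by lia),
    ← mem_antidiagonal.mp hij, pow_add]
  ring

end Scalars

section ExpSeries

variable {K : Type*} [Field K] {R S : Type*} [Ring R] [Algebra K R] [Ring S] [Algebra K S]

/-- The substitution `f(X) ↦ f(aX)`. Unlike `PowerSeries.rescale`, it allows coefficients in a
noncommutative algebra. -/
noncomputable def rescaleSeries (a : K) (f : R⟦X⟧) : R⟦X⟧ :=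
  PowerSeries.mk fun p => a ^ p • PowerSeries.coeff p f

/-- The exponential series `e^{xX} = ∑ xᵏXᵏ/k!` of an element `x` of a possibly noncommutative
`K`-algebra. -/
noncomputable def expSeries (K : Type*) [Field K] {R : Type*} [Ring R] [Algebra K R] (x : R) :
    R⟦X⟧ :=
  PowerSeries.mk fun k => (k.factorial : K)⁻¹ • x ^ k

theorem coeff_rescaleSeries (a : K) (f : R⟦X⟧) (p : ℕ) :
    PowerSeries.coeff p (rescaleSeries a f) = a ^ p • PowerSeries.coeff p f :=
  PowerSeries.coeff_mk _ _

theorem coeff_expSeries (x : R) (k : ℕ) :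
    PowerSeries.coeff k (expSeries K x) = (k.factorial : K)⁻¹ • x ^ k :=
  PowerSeries.coeff_mk _ _

theorem rescaleSeries_mul (a : K) (f g : R⟦X⟧) :
    rescaleSeries a (f * g) = rescaleSeries a f * rescaleSeries a g := by
  ext p
  simp only [coeff_rescaleSeries, PowerSeries.coeff_mul, smul_sum]
  refine sum_congr rfl fun ij hij => ?_
  rw [smul_mul_smul_comm, ← pow_add, mem_antidiagonal.mp hij]

theorem mapAlgHom_rescaleSeries (f : R →ₐ[K] S) (a : K) (g : R⟦X⟧) :
    PowerSeries.mapAlgHom f (rescaleSeries a g) =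
      rescaleSeries a (PowerSeries.mapAlgHom f g) := by
  ext p
  simp [PowerSeries.mapAlgHom_apply, coeff_rescaleSeries]

theorem rescaleSeries_expSeries (a : K) (x : R) :
    rescaleSeries a (expSeries K x) = expSeries K (a • x) := by
  ext p
  rw [coeff_rescaleSeries, coeff_expSeries, coeff_expSeries, smul_pow, smul_comm]

theorem mapAlgHom_expSeries (f : R →ₐ[K] S) (x : R) :
    PowerSeries.mapAlgHom f (expSeries K x) = expSeries K (f x) := by
  ext p
  simp [PowerSeries.mapAlgHom_apply, coeff_expSeries]

theorem expSeries_add [CharZero K] {x y : R} (h : Commute x y) :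
    expSeries K (x + y) = expSeries K x * expSeries K y := by
  ext p
  simp only [coeff_expSeries, PowerSeries.coeff_mul, h.add_pow', smul_sum]
  refine sum_congr rfl fun ij hij => ?_
  obtain rfl := mem_antidiagonal.mp hij
  have hfac : ((ij.1 + ij.2).factorial : K) =
      (ij.1 + ij.2).choose ij.1 * (ij.1.factorial * ij.2.factorial : ℕ) := by
    rw [← Nat.cast_mul, ← mul_assoc, Nat.choose_symm_add,
      Nat.add_choose_mul_factorial_mul_factorial]
  have hchoose : ((ij.1 + ij.2).choose ij.1 : K) ≠ 0 :=
    Nat.cast_ne_zero.mpr (Nat.choose_pos (Nat.le_add_right _ _)).ne'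
  rw [smul_mul_smul_comm, ← Nat.cast_smul_eq_nsmul K, smul_smul, hfac, mul_inv_rev,
    inv_mul_cancel_right₀ hchoose, Nat.cast_mul, mul_inv]

theorem commute_of_commute_coeff {f g : R⟦X⟧}
    (h : ∀ i j, Commute (PowerSeries.coeff i f) (PowerSeries.coeff j g)) : Commute f g := by
  ext p
  rw [PowerSeries.coeff_mul, PowerSeries.coeff_mul, ← Nat.sum_antidiagonal_swap]
  exact sum_congr rfl fun ij _ => h _ _

end ExpSeries

section SandwichSeries

theorem sum_antidiagonal_assoc {A M : Type*} [AddMonoid A] [HasAntidiagonal A]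
    [AddCommMonoid M] (f : A → A → A → M) (p : A) :
    ∑ x ∈ antidiagonal p, ∑ y ∈ antidiagonal x.1, f y.1 y.2 x.2 =
      ∑ x ∈ antidiagonal p, ∑ y ∈ antidiagonal x.2, f x.1 y.1 y.2 := by
  simp only [sum_sigma']
  refine sum_nbij' (fun ⟨⟨_, c⟩, ⟨a, b⟩⟩ => ⟨(a, b + c), (b, c)⟩)
    (fun ⟨⟨a, _⟩, ⟨b, c⟩⟩ => ⟨(a + b, c), (a, b)⟩) ?_ ?_ ?_ ?_ ?_
  all_goals
    rintro ⟨⟨_, _⟩, ⟨_, _⟩⟩ h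
    obtain ⟨rfl, rfl⟩ : _ ∧ _ := by simpa [eq_comm] using h
    simp [add_assoc]

variable {K M N : Type*} [Field K] [AddCommGroup M] [Module K M] [AddCommGroup N] [Module K N]

/-- The `p`-th coefficient of the formal power series `S ∘ μ ∘ T` of linear maps `N → M`. -/
noncomputable def sandwichCoeff (S : (Module.End K M)⟦X⟧) (μ : N →ₗ[K] M)
    (T : (Module.End K N)⟦X⟧) (p : ℕ) : N →ₗ[K] M :=
  ∑ ij ∈ antidiagonal p, PowerSeries.coeff ij.1 S ∘ₗ μ ∘ₗ PowerSeries.coeff ij.2 T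

theorem sandwichCoeff_mul_left {R : (Module.End K M)⟦X⟧} {R' : (Module.End K N)⟦X⟧}
    {μ : N →ₗ[K] M} (h : ∀ i, PowerSeries.coeff i R ∘ₗ μ = μ ∘ₗ PowerSeries.coeff i R')
    (S : (Module.End K M)⟦X⟧) (T : (Module.End K N)⟦X⟧) (p : ℕ) :
    sandwichCoeff (S * R) μ T p = sandwichCoeff S μ (R' * T) p := by
  ext x
  simp only [sandwichCoeff, PowerSeries.coeff_mul, LinearMap.sum_apply, LinearMap.comp_apply,
    Module.End.mul_apply, map_sum]
  rw [sum_antidiagonal_assoc fun i j k =>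
    PowerSeries.coeff i S (PowerSeries.coeff j R (μ (PowerSeries.coeff k T x)))]
  exact sum_congr rfl fun _ _ => sum_congr rfl fun _ _ =>
    congrArg _ (LinearMap.congr_fun (h _) _)

theorem sandwichCoeff_rescaleSeries (a : K) (S : (Module.End K M)⟦X⟧) (μ : N →ₗ[K] M)
    (T : (Module.End K N)⟦X⟧) (p : ℕ) :
    sandwichCoeff (rescaleSeries a S) μ (rescaleSeries a T) p = a ^ p • sandwichCoeff S μ T p := by
  simp only [sandwichCoeff, coeff_rescaleSeries, smul_sum]
  refine sum_congr rfl fun ij hij => ?_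
  rw [LinearMap.comp_smul, LinearMap.comp_smul, LinearMap.smul_comp, smul_smul, ← pow_add,
    add_comm, mem_antidiagonal.mp hij]

theorem coeff_mul_comp {S T : (Module.End K M)⟦X⟧} {S' T' : (Module.End K N)⟦X⟧}
    {μ : N →ₗ[K] M}
    (hS : ∀ i, PowerSeries.coeff i S ∘ₗ μ = μ ∘ₗ PowerSeries.coeff i S')
    (hT : ∀ i, PowerSeries.coeff i T ∘ₗ μ = μ ∘ₗ PowerSeries.coeff i T') (p : ℕ) :
    PowerSeries.coeff p (S * T) ∘ₗ μ = μ ∘ₗ PowerSeries.coeff p (S' * T') := by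
  ext x
  simp only [PowerSeries.coeff_mul, LinearMap.sum_apply, LinearMap.comp_apply,
    Module.End.mul_apply, map_sum]
  refine sum_congr rfl fun ij _ => ?_
  have hTx := LinearMap.congr_fun (hT ij.2) x
  have hSx := LinearMap.congr_fun (hS ij.1) (PowerSeries.coeff ij.2 T' x)
  simp only [LinearMap.comp_apply] at hTx hSx
  rw [hTx, hSx]

theorem coeff_expSeries_comp {μ : N →ₗ[K] M} {x : Module.End K M} {y : Module.End K N}
    (h : x ∘ₗ μ = μ ∘ₗ y) (k : ℕ) :
    PowerSeries.coeff k (expSeries K x) ∘ₗ μ = μ ∘ₗ PowerSeries.coeff k (expSeries K y) := by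
  rw [coeff_expSeries, coeff_expSeries, LinearMap.smul_comp, LinearMap.comp_smul,
    Module.End.commute_pow_left_of_commute h]

end SandwichSeries

section EulerSeries

variable {n : ℕ}

theorem coeff_cE (c : ℕ → ℂ) (φ : PolA n) (e : (Fin n ⊕ Fin n) →₀ ℕ) :
    coeff e (cE c φ) = c (xiDeg e) * coeff e φ := by
  classical
  rw [cE, coeff_sum]
  simp only [coeff_monomial]
  rw [sum_ite_eq']
  split_ifs with h
  · rfl
  · rw [notMem_support_iff.mp h, mul_zero]

/-- The functional calculus `c ↦ c(E)` of the Euler operator. -/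
noncomputable def cEHom (n : ℕ) : (ℕ → ℂ) →ₐ[ℂ] Module.End ℂ (PolA n) :=
  AlgHom.ofLinearMap
    { toFun c :=
        { toFun := cE c
          map_add' _ _ := by ext; simp [coeff_cE, mul_add]
          map_smul' _ _ := by ext; simp [coeff_cE, mul_left_comm] }
      map_add' _ _ := by ext; simp [coeff_cE, add_mul]
      map_smul' _ _ := by ext; simp [coeff_cE, mul_assoc] }
    (by ext; simp [coeff_cE])
    (fun _ _ => by ext; simp [coeff_cE, mul_assoc])

theorem cEHom_apply (c : ℕ → ℂ) (φ : PolA n) : cEHom n c φ = cE c φ := rfl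

theorem coe_Dlin : ⇑(Dlin n) = Dop := by
  ext1 φ
  simp [Dlin, Dop]

theorem Dlin_pow_apply (d : ℕ) (φ : PolA n) : (Dlin n ^ d) φ = Dop^[d] φ := by
  rw [Module.End.pow_apply, coe_Dlin]

theorem Dlin_mul_cEHom (c : ℕ → ℂ) :
    Dlin n * cEHom n c = cEHom n (fun m => c (m + 1)) * Dlin n := by
  refine LinearMap.ext fun φ => ?_
  ext e
  have hdeg (i : Fin n) : xiDeg (e + Finsupp.single (Sum.inl i) 1 + Finsupp.single (Sum.inr i) 1) =
      xiDeg e + 1 := by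
    classical
    simp [xiDeg, sum_add_distrib, Finsupp.single_apply]
  simp only [Module.End.mul_apply, cEHom_apply, coeff_cE, coe_Dlin, Dop, coeff_sum, coeff_pderiv,
    hdeg, mul_sum, mul_assoc]

theorem Dlin_pow_mul_cEHom (a : ℕ) (c : ℕ → ℂ) :
    Dlin n ^ a * cEHom n c = cEHom n (fun m => c (m + a)) * Dlin n ^ a := by
  induction a generalizing c with
  | zero => simp
  | succ a ih =>
    rw [pow_succ, mul_assoc, Dlin_mul_cEHom, ← mul_assoc, ih, mul_assoc]
    simp only [add_assoc]

/-- The formal series `∑ c_d(E) D^d X^d`. -/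
noncomputable def eulerSeries (n : ℕ) (c : ℕ → ℕ → ℂ) : (Module.End ℂ (PolA n))⟦X⟧ :=
  PowerSeries.mk fun d => cEHom n (c d) * Dlin n ^ d

theorem coeff_eulerSeries_apply (c : ℕ → ℕ → ℂ) (d : ℕ) (φ : PolA n) :
    PowerSeries.coeff d (eulerSeries n c) φ = cE (c d) (Dop^[d] φ) := by
  rw [eulerSeries, PowerSeries.coeff_mk, Module.End.mul_apply, Dlin_pow_apply, cEHom_apply]

theorem eulerSeries_mul (b c : ℕ → ℕ → ℂ) :
    eulerSeries n b * eulerSeries n c =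
      eulerSeries n fun p m => ∑ ij ∈ antidiagonal p, b ij.1 m * c ij.2 (m + ij.1) := by
  ext1 p
  have hsum : (fun m => ∑ ij ∈ antidiagonal p, b ij.1 m * c ij.2 (m + ij.1)) =
      ∑ ij ∈ antidiagonal p, b ij.1 * fun m => c ij.2 (m + ij.1) := by
    ext m
    simp
  simp only [PowerSeries.coeff_mul, eulerSeries, PowerSeries.coeff_mk, hsum, map_sum, map_mul,
    sum_mul]
  refine sum_congr rfl fun ij hij => ?_
  rw [mul_assoc, ← mul_assoc (Dlin n ^ ij.1), Dlin_pow_mul_cEHom, mul_assoc, mul_assoc, ← pow_add,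
    mem_antidiagonal.mp hij]

theorem rescaleSeries_eulerSeries (a : ℂ) (c : ℕ → ℕ → ℂ) :
    rescaleSeries a (eulerSeries n c) = eulerSeries n fun d m => a ^ d * c d m := by
  ext1 p
  have hsmul : (fun m => a ^ p * c p m) = a ^ p • c p := rfl
  rw [coeff_rescaleSeries, eulerSeries, eulerSeries, PowerSeries.coeff_mk, PowerSeries.coeff_mk,
    hsmul, map_smul, smul_mul_assoc]

theorem expSeries_neg_Dlin :
    expSeries ℂ (-Dlin n) = eulerSeries n fun d _ => (-1) ^ d * (d.factorial : ℂ)⁻¹ := by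
  ext1 p
  have hconst : (fun _ : ℕ => (-1) ^ p * (p.factorial : ℂ)⁻¹) =
      ((-1) ^ p * (p.factorial : ℂ)⁻¹) • 1 := by
    ext
    simp
  rw [coeff_expSeries, eulerSeries, PowerSeries.coeff_mk, hconst, map_smul, map_one,
    smul_mul_assoc, one_mul, ← neg_one_smul ℂ (Dlin n), smul_pow, smul_smul, mul_comm]

theorem expSeries_neg_Dlin_mul_eulerSeries_hScal (lam : ℂ) :
    expSeries ℂ (-Dlin n) * eulerSeries n (hScal n lam) =
      rescaleSeries (-1 : ℂ) (eulerSeries n (hScal n (1 - lam))) := by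
  simp_rw [expSeries_neg_Dlin, eulerSeries_mul, rescaleSeries_eulerSeries,
    sum_neg_one_pow_div_factorial_mul_hScal]

theorem rescaleSeries_eulerSeries_gScal_mul_expSeries (lam : ℂ) :
    rescaleSeries (-1 : ℂ) (eulerSeries n (gScal n (1 - lam))) * expSeries ℂ (-Dlin n) =
      eulerSeries n (gScal n lam) := by
  simp_rw [expSeries_neg_Dlin, rescaleSeries_eulerSeries, eulerSeries_mul,
    sum_gScal_mul_neg_one_pow_div_factorial]

end EulerSeries

section TensorSquare

variable {K A ι : Type*} [CommRing K] [AddCommGroup A] [Module K A] [Fintype ι]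

/-- The operator `∑ᵢ fᵢ ⊗ gᵢ` on `A ⊗ A`. -/
noncomputable def contraction (f g : ι → Module.End K A) : Module.End K (A ⊗[K] A) :=
  ∑ i, TensorProduct.map (f i) (g i)

theorem contraction_pow_tmul (f g : ι → Module.End K A) (k : ℕ) (x y : A) :
    (contraction f g ^ k) (x ⊗ₜ y) =
      ∑ α : Fin k → ι,
        (List.ofFn α).foldr (fun i => f i) x ⊗ₜ (List.ofFn α).foldr (fun i => g i) y := by
  induction k with
  | zero => simp
  | succ k ih =>
    rw [pow_succ', Module.End.mul_apply, ih, ← (Fin.consEquiv fun _ => ι).sum_comp,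
      Fintype.sum_prod_type, map_sum, sum_comm]
    simp [contraction]

theorem contraction_comp_comm (f g : ι → Module.End K A) :
    contraction f g ∘ₗ (TensorProduct.comm K A A).toLinearMap =
      (TensorProduct.comm K A A).toLinearMap ∘ₗ contraction g f := by
  ext x y
  simp [contraction]

theorem commute_tensorProduct_map {f f' g g' : Module.End K A} (hf : Commute f f')
    (hg : Commute g g') :
    Commute (TensorProduct.map f g : Module.End K (A ⊗[K] A)) (TensorProduct.map f' g') := by
  rw [Commute, SemiconjBy, ← TensorProduct.map_mul, hf.eq, hg.eq, TensorProduct.map_mul]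

theorem commute_contraction {f g f' g' : ι → Module.End K A} (hf : ∀ i j, Commute (f i) (f' j))
    (hg : ∀ i j, Commute (g i) (g' j)) : Commute (contraction f g) (contraction f' g') :=
  Commute.sum_left _ _ _ fun i _ => Commute.sum_right _ _ _ fun j _ =>
    commute_tensorProduct_map (hf i j) (hg i j)

theorem commute_contraction_rTensor {f g : ι → Module.End K A} {d : Module.End K A}
    (h : ∀ i, Commute (f i) d) :
    Commute (contraction f g) (Module.End.rTensorAlgHom K A A d) :=
  Commute.sum_left _ _ _ fun i _ => commute_tensorProduct_map (h i) (Commute.one_right (g i))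

theorem commute_contraction_lTensor {f g : ι → Module.End K A} {d : Module.End K A}
    (h : ∀ i, Commute (g i) d) :
    Commute (contraction f g) (Module.End.lTensorAlgHom K A A d) :=
  Commute.sum_left _ _ _ fun i _ => commute_tensorProduct_map (Commute.one_right (f i)) (h i)

theorem commute_rTensor_lTensor (d d' : Module.End K A) :
    Commute (Module.End.rTensorAlgHom K A A d) (Module.End.lTensorAlgHom K A A d') :=
  commute_tensorProduct_map (Commute.one_right d) (Commute.one_left d')

/-- The action `S ⊗ S` on `A ⊗ A` of a formal series `S` of operators on `A`. -/
noncomputable def tensorSquare (S : (Module.End K A)⟦X⟧) : (Module.End K (A ⊗[K] A))⟦X⟧ :=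
  PowerSeries.mapAlgHom (Module.End.rTensorAlgHom K A A) S *
    PowerSeries.mapAlgHom (Module.End.lTensorAlgHom K A A) S

theorem commute_mapAlgHom_rTensor_lTensor (S T : (Module.End K A)⟦X⟧) :
    Commute (PowerSeries.mapAlgHom (Module.End.rTensorAlgHom K A A) S)
      (PowerSeries.mapAlgHom (Module.End.lTensorAlgHom K A A) T) :=
  commute_of_commute_coeff fun i j => by
    simpa [PowerSeries.mapAlgHom_apply] using
      commute_rTensor_lTensor (PowerSeries.coeff i S) (PowerSeries.coeff j T)

theorem tensorSquare_mul (S T : (Module.End K A)⟦X⟧) :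
    tensorSquare (S * T) = tensorSquare S * tensorSquare T := by
  rw [tensorSquare, map_mul, map_mul, (commute_mapAlgHom_rTensor_lTensor T S).mul_mul_mul_comm]
  rfl

theorem coeff_tensorSquare_tmul (S : (Module.End K A)⟦X⟧) (p : ℕ) (x y : A) :
    PowerSeries.coeff p (tensorSquare S) (x ⊗ₜ y) =
      ∑ ij ∈ antidiagonal p, PowerSeries.coeff ij.1 S x ⊗ₜ PowerSeries.coeff ij.2 S y := by
  simp only [tensorSquare, PowerSeries.mapAlgHom_apply, PowerSeries.coeff_mul,
    PowerSeries.coeff_map, LinearMap.sum_apply]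
  rfl

theorem coeff_tensorSquare_comp_comm (S : (Module.End K A)⟦X⟧) (p : ℕ) :
    PowerSeries.coeff p (tensorSquare S) ∘ₗ (TensorProduct.comm K A A).toLinearMap =
      (TensorProduct.comm K A A).toLinearMap ∘ₗ PowerSeries.coeff p (tensorSquare S) := by
  refine TensorProduct.ext' fun x y => ?_
  simp only [LinearMap.comp_apply, LinearEquiv.coe_coe, TensorProduct.comm_tmul,
    coeff_tensorSquare_tmul, map_sum]
  exact Nat.sum_antidiagonal_swap
    (f := fun ij => PowerSeries.coeff ij.2 S y ⊗ₜ PowerSeries.coeff ij.1 S x)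

end TensorSquare

section TensorSquareField

variable {K A : Type*} [Field K] [AddCommGroup A] [Module K A]

theorem rescaleSeries_tensorSquare (a : K) (S : (Module.End K A)⟦X⟧) :
    rescaleSeries a (tensorSquare S) = tensorSquare (rescaleSeries a S) := by
  rw [tensorSquare, tensorSquare, rescaleSeries_mul, mapAlgHom_rescaleSeries,
    mapAlgHom_rescaleSeries]

theorem tensorSquare_expSeries (x : Module.End K A) :
    tensorSquare (expSeries K x) =
      expSeries K (Module.End.rTensorAlgHom K A A x) *
        expSeries K (Module.End.lTensorAlgHom K A A x) := by
  rw [tensorSquare, mapAlgHom_expSeries, mapAlgHom_expSeries]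

end TensorSquareField

section CommutingDerivations

variable {K A ι : Type*} [Field K] [CommRing A] [Algebra K A] [Fintype ι]
  (f g : ι → Derivation K A A)

/-- The bidifferential operator `P = ∑ᵢ fᵢ ⊗ gᵢ` attached to two families of derivations. -/
noncomputable def derivContraction : Module.End K (A ⊗[K] A) :=
  contraction (fun i => (f i : A →ₗ[K] A)) fun i => (g i : A →ₗ[K] A)

/-- The second-order operator `∑ᵢ gᵢ fᵢ`, which is `D` when `fᵢ = ∂/∂ξᵢ` and `gᵢ = ∂/∂uᵢ`. -/
noncomputable def mixedLaplacian : Module.End K A :=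
  ∑ i, (g i : A →ₗ[K] A) ∘ₗ (f i : A →ₗ[K] A)

/-- The coefficient of `ħᵖ` in `G ∘ μ ∘ e^{ħP} ∘ (H ⊗ H)`, where `μ` is the multiplication of `A`
and `P = ∑ᵢ fᵢ ⊗ gᵢ`. -/
noncomputable def starCoeff (G H : (Module.End K A)⟦X⟧) (p : ℕ) : A ⊗[K] A →ₗ[K] A :=
  sandwichCoeff G (LinearMap.mul' K A) (expSeries K (derivContraction f g) * tensorSquare H) p

theorem starCoeff_tmul (G H : (Module.End K A)⟦X⟧) (p : ℕ) (x y : A) :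
    starCoeff f g G H p (x ⊗ₜ y) =
      ∑ a ∈ antidiagonal p, ∑ b ∈ antidiagonal a.2, ∑ c ∈ antidiagonal b.2,
        PowerSeries.coeff a.1 G ((b.1.factorial : K)⁻¹ • ∑ α : Fin b.1 → ι,
          (List.ofFn α).foldr (fun i => f i) (PowerSeries.coeff c.1 H x) *
            (List.ofFn α).foldr (fun i => g i) (PowerSeries.coeff c.2 H y)) := by
  simp only [starCoeff, sandwichCoeff, LinearMap.sum_apply, LinearMap.comp_apply,
    PowerSeries.coeff_mul, Module.End.mul_apply, coeff_tensorSquare_tmul, map_sum, coeff_expSeries,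
    LinearMap.smul_apply, derivContraction, contraction_pow_tmul, map_smul, LinearMap.mul'_apply]
  rfl

theorem starCoeff_tmul_swap (G H : (Module.End K A)⟦X⟧) (p : ℕ) (x y : A) :
    starCoeff f g G H p (y ⊗ₜ x) = starCoeff g f G H p (x ⊗ₜ y) := by
  have hflip (q : ℕ) := coeff_mul_comp
    (coeff_expSeries_comp (K := K) (contraction_comp_comm (fun i => (f i : A →ₗ[K] A))
      fun i => (g i : A →ₗ[K] A)))
    (coeff_tensorSquare_comp_comm H) q
  simp only [starCoeff, sandwichCoeff, LinearMap.sum_apply, LinearMap.comp_apply]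
  refine sum_congr rfl fun ij _ => congrArg _ ?_
  exact (congrArg _ (LinearMap.congr_fun (hflip ij.2) (x ⊗ₜ y))).trans
    (LinearMap.congr_fun (LinearMap.mul'_comp_comm (R := K) (A := A)) _)

theorem mixedLaplacian_comp_mul' :
    mixedLaplacian f g ∘ₗ LinearMap.mul' K A =
      LinearMap.mul' K A ∘ₗ
        (derivContraction g f + (Module.End.rTensorAlgHom K A A (mixedLaplacian f g) +
          Module.End.lTensorAlgHom K A A (mixedLaplacian f g)) + derivContraction f g) := by
  have hr (d : Module.End K A) (x y : A) :
      Module.End.rTensorAlgHom K A A d (x ⊗ₜ y) = d x ⊗ₜ y := rfl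
  have hl (d : Module.End K A) (x y : A) :
      Module.End.lTensorAlgHom K A A d (x ⊗ₜ y) = x ⊗ₜ d y := rfl
  refine TensorProduct.ext' fun x y => ?_
  simp only [LinearMap.comp_apply, LinearMap.add_apply, hr, hl, mixedLaplacian, derivContraction,
    contraction, LinearMap.sum_apply, TensorProduct.map_tmul, map_add, map_sum,
    LinearMap.mul'_apply, Derivation.coeFn_coe, Derivation.leibniz, smul_eq_mul, sum_add_distrib]
  simp only [mul_comm]
  abel

variable {f g}

theorem commute_mixedLaplacian {d : Module.End K A} (hf : ∀ i, Commute d (f i : A →ₗ[K] A))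
    (hg : ∀ i, Commute d (g i : A →ₗ[K] A)) : Commute d (mixedLaplacian f g) :=
  Commute.sum_right _ _ _ fun i _ => (hg i).mul_right (hf i)

variable [CharZero K]
  (hff : ∀ i j, Commute (f i : A →ₗ[K] A) (f j : A →ₗ[K] A))
  (hfg : ∀ i j, Commute (f i : A →ₗ[K] A) (g j : A →ₗ[K] A))
  (hgg : ∀ i j, Commute (g i : A →ₗ[K] A) (g j : A →ₗ[K] A))

include hff hfg hgg

theorem expSeries_mul_expSeries_derivContraction :
    expSeries K (-(derivContraction g f + (Module.End.rTensorAlgHom K A A (mixedLaplacian f g) +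
        Module.End.lTensorAlgHom K A A (mixedLaplacian f g)) + derivContraction f g)) *
        expSeries K (derivContraction f g) =
      rescaleSeries (-1 : K) (expSeries K (derivContraction g f)) *
        tensorSquare (expSeries K (-mixedLaplacian f g)) := by
  have hf i : Commute (f i : A →ₗ[K] A) (mixedLaplacian f g) :=
    commute_mixedLaplacian (hff i) (hfg i)
  have hg i : Commute (g i : A →ₗ[K] A) (mixedLaplacian f g) :=
    commute_mixedLaplacian (fun j => (hfg j i).symm) (hgg i)
  have hQP : Commute (derivContraction g f) (derivContraction f g) :=
    commute_contraction (fun i j => (hfg j i).symm) hfg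
  have hlaplacian {d e : ι → Derivation K A A}
      (hd : ∀ i, Commute (d i : A →ₗ[K] A) (mixedLaplacian f g))
      (he : ∀ i, Commute (e i : A →ₗ[K] A) (mixedLaplacian f g)) :
      Commute (derivContraction d e) (Module.End.rTensorAlgHom K A A (mixedLaplacian f g) +
        Module.End.lTensorAlgHom K A A (mixedLaplacian f g)) :=
    (commute_contraction_rTensor hd).add_right (commute_contraction_lTensor he)
  have h₁₂ := commute_rTensor_lTensor (mixedLaplacian f g) (mixedLaplacian f g)
  rw [tensorSquare_expSeries, rescaleSeries_expSeries, neg_one_smul, map_neg, map_neg,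
    ← expSeries_add h₁₂.neg_left.neg_right,
    ← expSeries_add ((hQP.add_left (hlaplacian hf hg).symm).add_left (Commute.refl _)).neg_left,
    ← neg_add, ← expSeries_add (hlaplacian hg hf).neg_left.neg_right]
  congr 1
  abel

theorem starCoeff_eq_neg_one_pow_smul {G G' H H' : (Module.End K A)⟦X⟧}
    (hG : rescaleSeries (-1 : K) G' * expSeries K (-mixedLaplacian f g) = G)
    (hH : expSeries K (-mixedLaplacian f g) * H = rescaleSeries (-1 : K) H') (p : ℕ) :
    starCoeff f g G H p = (-1 : K) ^ p • starCoeff g f G' H' p := by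
  have hexp := coeff_expSeries_comp (K := K) (x := -mixedLaplacian f g) (μ := LinearMap.mul' K A)
    (by rw [LinearMap.neg_comp, mixedLaplacian_comp_mul', ← LinearMap.comp_neg])
  rw [starCoeff, ← hG, sandwichCoeff_mul_left hexp, ← mul_assoc,
    expSeries_mul_expSeries_derivContraction hff hfg hgg, mul_assoc, ← tensorSquare_mul, hH,
    ← rescaleSeries_tensorSquare, ← rescaleSeries_mul, sandwichCoeff_rescaleSeries, starCoeff]

end CommutingDerivations

section LecomteOvsienko

theorem commute_pderiv {R σ : Type*} [CommRing R] (v w : σ) :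
    Commute ((pderiv v : Derivation R (MvPolynomial σ R) _) : Module.End R (MvPolynomial σ R))
      (pderiv w : Derivation R (MvPolynomial σ R) _) := by
  have hbracket : ⁅pderiv (R := R) v, pderiv (R := R) w⁆ = 0 := by
    refine MvPolynomial.derivation_ext fun i => ?_
    classical
    simp [Derivation.commutator_apply, pderiv_X, Pi.single_apply, apply_ite]
  exact LinearMap.ext fun φ => sub_eq_zero.mp (DFunLike.congr_fun hbracket φ)

theorem sum_range_ite_eq_sum_antidiagonal {M : Type*} [AddCommMonoid M] (p : ℕ)
    (f : ℕ → ℕ → ℕ → ℕ → M) :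
    (∑ i ∈ range (p + 1), ∑ j ∈ range (p + 1), ∑ k ∈ range (p + 1), ∑ m ∈ range (p + 1),
      if i + j + k + m = p then f i j k m else 0) =
    ∑ x ∈ antidiagonal p, ∑ y ∈ antidiagonal x.2, ∑ z ∈ antidiagonal y.2, f z.1 z.2 y.1 x.1 := by
  simp only [← sum_product', ← sum_filter]
  simp only [sum_sigma']
  refine sum_nbij' (fun ⟨⟨i, j, k⟩, m⟩ => ⟨(m, k + (i + j)), ⟨(k, i + j), (i, j)⟩⟩)
    (fun ⟨⟨m, _⟩, ⟨⟨k, _⟩, ⟨i, j⟩⟩⟩ => ⟨(i, j, k), m⟩) ?_ ?_ ?_ ?_ ?_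
  · rintro ⟨⟨i, j, k⟩, m⟩ h
    simp only [mem_sigma, mem_filter, mem_product, mem_range,
      HasAntidiagonal.mem_antidiagonal] at h ⊢
    lia
  · rintro ⟨⟨m, _⟩, ⟨⟨k, _⟩, ⟨i, j⟩⟩⟩ h
    simp only [mem_sigma, mem_filter, mem_product, mem_range,
      HasAntidiagonal.mem_antidiagonal] at h ⊢
    lia
  · exact fun _ _ => rfl
  · rintro ⟨⟨m, _⟩, ⟨⟨k, _⟩, ⟨i, j⟩⟩⟩ h
    obtain ⟨-, rfl, rfl⟩ : _ ∧ _ ∧ _ := by simpa [eq_comm] using h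
    rfl
  · exact fun _ _ => rfl

variable {n : ℕ}

theorem C_eq_starCoeff (lam : ℂ) (p : ℕ) (φ ψ : PolA n) :
    C n lam p φ ψ =
      starCoeff (fun i => pderiv (Sum.inr i)) (fun i => pderiv (Sum.inl i))
        (eulerSeries n (gScal n lam)) (eulerSeries n (hScal n lam)) p (φ ⊗ₜ ψ) := by
  rw [C, sum_range_ite_eq_sum_antidiagonal p fun i j k m =>
    bg lam m (Nop k (bh lam i φ) (bh lam j ψ)), starCoeff_tmul]
  simp only [coeff_eulerSeries_apply, Nop, bg, bh]

end LecomteOvsienko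

end LO

/-- `C^λ_p(φ,ψ) = (−1)^p C^{1−λ}_p(ψ,φ)`. -/
theorem stmt_4 (n : ℕ) (hn : 1 ≤ n) (lam : ℂ) (p : ℕ) (φ ψ : PolA n) :
    LO.C n lam p φ ψ = ((-1 : ℂ) ^ p) • LO.C n (1 - lam) p ψ φ := by
  rw [LO.C_eq_starCoeff, LO.C_eq_starCoeff, LO.starCoeff_tmul_swap _ _ _ _ p φ ψ,
    LO.starCoeff_eq_neg_one_pow_smul (fun _ _ => LO.commute_pderiv _ _)
      (fun _ _ => LO.commute_pderiv _ _) (fun _ _ => LO.commute_pderiv _ _)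
      (LO.rescaleSeries_eulerSeries_gScal_mul_expSeries lam)
      (LO.expSeries_neg_Dlin_mul_eulerSeries_hScal lam)]
  rfl
end
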